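/- Let S ⊆ ℝⁿ (n ≥ 2) be a d-set with n−1 < d < n, let 1 < p < ∞ and (n−d)/p < s < 1, and let r ∈ (1,p) be such that ω := n(1/p − 1/r) + s satisfies n−d < ωr < sp and 0 < 1/r − 1/p < ω/n. Let 𝒲_S be a Whitney decomposition of ℝⁿ ∖ S. Then there exist constants c₀ > 2 and C such that for every f ∈ W^{s,p}(ℝⁿ) with Tr_S f = 0 ℋᵈ-almost everywhere on S, and every Q ∈ 𝒲_S with ℓ(Q) ≤ 1, writing Q* := 12Q and B := B(x_Q, ℓ(Q*)/c₀) (Euclidean ball) and f_B := ⨍_B f, one has ∫_Q |f(x) − f_B|^p dx + |Q| |f_B|^p ≤ C |Q*|^{1 + pω/n − p/r} (∫_{Q*} ∫_{Q*} |f(x)−f(y)|^r / |x−y|^{n+ωr} dy dx)^{p/r}. -/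

import Mathlib

open MeasureTheory Metric Set Filter
open scoped ENNReal NNReal Topology

noncomputable section

/-- ℝⁿ, with the sup-norm (given by the product metric on `Fin n → ℝ`). -/
abbrev Rn (n : ℕ) := Fin n → ℝ

/-- The Euclidean distance on `Rn n`. -/
def euclDist {n : ℕ} (x y : Rn n) : ℝ := Real.sqrt (∑ i, (x i - y i) ^ 2)

/-- The open Euclidean ball in `Rn n`. -/
def euclBall {n : ℕ} (x : Rn n) (r : ℝ) : Set (Rn n) := {y | euclDist x y < r}

/-- `S` is an (Ahlfors) `d`-set with regularity constant `C`. -/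
def IsDSet {n : ℕ} (S : Set (Rn n)) (d C : ℝ) : Prop :=
  IsClosed S ∧ 1 < C ∧ ∀ w ∈ S, ∀ r : ℝ, 0 < r → r ≤ 1 →
    ENNReal.ofReal (C⁻¹ * r ^ d) ≤ μH[d] (closedBall w r ∩ S) ∧
      μH[d] (closedBall w r ∩ S) ≤ ENNReal.ofReal (C * r ^ d)

/-- `Tr_S f = 0` pointwise ℋᵈ-almost everywhere on `S`. -/
def TraceZero {n : ℕ} (S : Set (Rn n)) (d : ℝ) (f : Rn n → ℝ) : Prop :=
  ∀ᵐ x ∂(μH[d]).restrict S,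
    Tendsto (fun r : ℝ => ⨍ y in closedBall x r, f y) (𝓝[>] 0) (𝓝 0)

/-- The `W^{s,p}(ℝⁿ)` norm (in `[0,∞]`), with Euclidean distance in the kernel. -/
def sobolevNorm {n : ℕ} (s p : ℝ) (f : Rn n → ℝ) : ℝ≥0∞ :=
  (∫⁻ x, ENNReal.ofReal |f x| ^ p) ^ (1 / p) +
  (∫⁻ x, ∫⁻ y, ENNReal.ofReal (|f x - f y| ^ p / euclDist x y ^ (s * p + n))) ^ (1 / p)

/-- The closed dyadic cube `2^{−j}(m + [0,1]ⁿ)`. Its sup-norm diameter is `2^{−j}`. -/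
def dyadicCube {n : ℕ} (j : ℤ) (m : Fin n → ℤ) : Set (Rn n) :=
  {y | ∀ i, (m i : ℝ) * 2 ^ (-j) ≤ y i ∧ y i ≤ ((m i : ℝ) + 1) * 2 ^ (-j)}

/-- The center of the dyadic cube `2^{−j}(m + [0,1]ⁿ)`. -/
def dyadicCenter {n : ℕ} (j : ℤ) (m : Fin n → ℤ) : Rn n :=
  fun i => ((m i : ℝ) + 1 / 2) * 2 ^ (-j)

/-- `W` is a Whitney decomposition of `ℝⁿ ∖ S` (dyadic cubes indexed by `(j,m)`). -/
def IsWhitney {n : ℕ} (S : Set (Rn n)) (W : Set (ℤ × (Fin n → ℤ))) : Prop :=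
  (∀ Q ∈ W, ∀ Q' ∈ W, Q ≠ Q' →
      interior (dyadicCube Q.1 Q.2) ∩ interior (dyadicCube Q'.1 Q'.2) = ∅) ∧
  (⋃ Q ∈ W, dyadicCube Q.1 Q.2) = Sᶜ ∧
  (∀ Q ∈ W, (∀ x ∈ dyadicCube Q.1 Q.2, (2:ℝ) ^ (-Q.1) ≤ infDist x S) ∧
      (∃ x ∈ dyadicCube Q.1 Q.2, infDist x S ≤ 4 * (2:ℝ) ^ (-Q.1)))

lemma euclDist_le' {n : ℕ} (x y : Rn n) : euclDist x y ≤ n * dist x y := by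
  unfold euclDist
  rw [Real.sqrt_le_left (by positivity)]
  have h : ∀ i, (x i - y i) ^ 2 ≤ (dist x y) ^ 2 := fun i => by
    have := dist_le_pi_dist x y i
    rw [Real.dist_eq] at this
    rw [← sq_abs (x i - y i)]
    gcongr
  have h2 : ∑ i, (x i - y i) ^ 2 ≤ n * (dist x y) ^ 2 := by
    calc ∑ i, (x i - y i) ^ 2 ≤ ∑ _i : Fin n, (dist x y) ^ 2 := Finset.sum_le_sum fun i _ => h i
      _ = _ := by simp
  refine h2.trans ?_
  rw [mul_pow]
  gcongr
  exact_mod_cast Nat.le_self_pow (by norm_num) n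

lemma dist_le_euclDist {n : ℕ} (x y : Rn n) : dist x y ≤ euclDist x y := by
  unfold euclDist
  rw [dist_pi_le_iff (Real.sqrt_nonneg _)]
  intro i
  rw [Real.dist_eq]
  apply Real.abs_le_sqrt
  exact Finset.single_le_sum (f := fun i => (x i - y i) ^ 2) (fun _ _ => sq_nonneg _) (Finset.mem_univ i)

lemma euclDist_cont {n : ℕ} : Continuous (fun z : Rn n × Rn n => euclDist z.1 z.2) := by
  unfold euclDist
  fun_prop

/-- The kernel. -/
def kern {n : ℕ} (f : Rn n → ℝ) (r κ : ℝ) (x y : Rn n) : ℝ≥0∞ :=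
  ENNReal.ofReal |f x - f y| ^ r * ENNReal.ofReal (euclDist x y) ^ (-κ)

lemma kern_meas {n : ℕ} {f : Rn n → ℝ} (hf : Measurable f) (r κ : ℝ) :
    Measurable (fun z : Rn n × Rn n => kern f r κ z.1 z.2) := by
  unfold kern
  have h1 : Measurable (fun z : Rn n × Rn n => |f z.1 - f z.2|) := by fun_prop
  have h2 := (euclDist_cont (n := n)).measurable
  exact (h1.ennreal_ofReal.pow_const _).mul (h2.ennreal_ofReal.pow_const _)

lemma jensen_step {n : ℕ} {f : Rn n → ℝ} {V : Set (Rn n)}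
    (fV : IntegrableOn f V) (h0 : volume V ≠ 0) (ht : volume V ≠ ⊤) {r : ℝ} (hr : 1 < r) (c : ℝ) :
    ENNReal.ofReal |c - ⨍ y in V, f y| ^ r ≤
      (volume V)⁻¹ * ∫⁻ y in V, ENNReal.ofReal |c - f y| ^ r := by
  set μ : Measure (Rn n) := (volume V)⁻¹ • volume.restrict V with hμ
  have : IsProbabilityMeasure μ := ⟨by
    simp [hμ, ENNReal.inv_mul_cancel h0 ht]⟩
  have hav : (⨍ y in V, f y) = ∫ y, f y ∂μ := by
    simp [average, hμ]
  have hint : Integrable f μ := fV.smul_measure (by simp [h0])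
  have hc : c - ∫ y, f y ∂μ = ∫ y, (c - f y) ∂μ := by
    rw [integral_sub (integrable_const _) hint]; simp
  rw [hav, hc]
  have e1 : ∀ t : ℝ, ENNReal.ofReal |t| = ‖t‖ₑ := fun t => by
    rw [← Real.norm_eq_abs, ofReal_norm]
  simp only [e1]
  have hm : AEStronglyMeasurable (fun y => c - f y) μ :=
    ((integrable_const c).sub hint).aestronglyMeasurable
  have h1 := eLpNorm'_le_eLpNorm'_of_exponent_le (f := fun y => c - f y) one_pos hr.le μ hm
  unfold eLpNorm' at h1
  simp only [ENNReal.rpow_one, div_one] at h1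
  have h2 := (enorm_integral_le_lintegral_enorm (μ := μ) (fun y => c - f y)).trans h1
  calc _ ≤ ((∫⁻ y, ‖c - f y‖ₑ ^ r ∂μ) ^ (1 / r)) ^ r := by gcongr
    _ = ∫⁻ y, ‖c - f y‖ₑ ^ r ∂μ := by
      rw [← ENNReal.rpow_mul, one_div, inv_mul_cancel₀ (by positivity), ENNReal.rpow_one]
    _ = _ := by rw [hμ, lintegral_smul_measure]; simp

lemma kern_lower {n : ℕ} (f : Rn n → ℝ) {r κ D : ℝ} (hr : 1 < r) (hκ : 0 ≤ κ) {x y : Rn n}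
    (hD : euclDist x y ≤ D) :
    ENNReal.ofReal |f x - f y| ^ r ≤ ENNReal.ofReal D ^ κ * kern f r κ x y := by
  rcases eq_or_ne x y with rfl | hne
  · simp [ENNReal.zero_rpow_of_pos (by linarith : 0 < r)]
  have hpos : 0 < euclDist x y := (dist_pos.2 hne).trans_le (dist_le_euclDist x y)
  unfold kern
  calc ENNReal.ofReal |f x - f y| ^ r
      = ENNReal.ofReal (euclDist x y) ^ κ * (ENNReal.ofReal |f x - f y| ^ r *
        ENNReal.ofReal (euclDist x y) ^ (-κ)) := by
        rw [mul_left_comm, ← ENNReal.rpow_add _ _ (by simpa using hpos) (by simp)]; simp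
    _ ≤ _ := by gcongr

lemma avg_diff {n : ℕ} {f : Rn n → ℝ} (hf : Measurable f) {U V : Set (Rn n)}
    (hU : MeasurableSet U) (hV : MeasurableSet V)
    (fU : IntegrableOn f U) (fV : IntegrableOn f V) (hU0 : volume U ≠ 0) (hUt : volume U ≠ ⊤)
    (hV0 : volume V ≠ 0) (hVt : volume V ≠ ⊤) {r κ D : ℝ} (hr : 1 < r) (hκ : 0 ≤ κ)
    (hD : ∀ x ∈ U, ∀ y ∈ V, euclDist x y ≤ D) :
    ENNReal.ofReal |(⨍ y in U, f y) - ⨍ y in V, f y| ^ r ≤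
      (volume U)⁻¹ * ((volume V)⁻¹ * (ENNReal.ofReal D ^ κ *
        ∫⁻ x in U, ∫⁻ y in V, kern f r κ x y)) := by
  have h1 := jensen_step fU hU0 hUt hr (⨍ y in V, f y)
  rw [abs_sub_comm]
  refine h1.trans ?_
  gcongr
  have mk := kern_meas hf r κ
  calc ∫⁻ x in U, ENNReal.ofReal |(⨍ y in V, f y) - f x| ^ r
      ≤ ∫⁻ x in U, (volume V)⁻¹ * (ENNReal.ofReal D ^ κ * ∫⁻ y in V, kern f r κ x y) := by
        refine setLIntegral_mono' hU fun x hx => ?_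
        rw [abs_sub_comm]
        refine (jensen_step fV hV0 hVt hr (f x)).trans ?_
        gcongr
        rw [← lintegral_const_mul _ (by fun_prop)]
        exact setLIntegral_mono' hV fun y hy => kern_lower f hr hκ (hD x hx y hy)
    _ = _ := by
        have m2 : Measurable fun x => ∫⁻ y in V, kern f r κ x y := mk.lintegral_prod_right'
        rw [lintegral_const_mul _ (by fun_prop), lintegral_const_mul _ m2]

lemma ball_meas {n : ℕ} {G : Rn n → ℝ≥0∞} (hG : Measurable G) (ρ : ℝ) :
    Measurable (fun z : Rn n × Rn n => (closedBall z.1 ρ).indicator G z.2) := by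
  have : (fun z : Rn n × Rn n => (closedBall z.1 ρ).indicator G z.2)
      = {z : Rn n × Rn n | dist z.2 z.1 ≤ ρ}.indicator (fun z => G z.2) := by
    ext z; simp [indicator, mem_closedBall]
  rw [this]
  refine (hG.comp measurable_snd).indicator ?_
  exact (isClosed_le (by fun_prop) (by fun_prop)).measurableSet

lemma nu_meas {n : ℕ} {G : Rn n → ℝ≥0∞} (hG : Measurable G) (ρ : ℝ) :
    Measurable (fun x : Rn n => ∫⁻ y in closedBall x ρ, G y) := by
  have := (ball_meas hG ρ).lintegral_prod_right' (ν := volume)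
  simpa only [lintegral_indicator isClosed_closedBall.measurableSet] using this

lemma nu_int {n : ℕ} {G : Rn n → ℝ≥0∞} (hG : Measurable G) (ρ : ℝ) (μ : Measure (Rn n)) [SFinite μ]
    {M : ℝ≥0∞} (hM : ∀ y, μ (closedBall y ρ) ≤ M) :
    ∫⁻ x, (∫⁻ y in closedBall x ρ, G y) ∂μ ≤ M * ∫⁻ y, G y := by
  have h1 : ∀ x, (∫⁻ y in closedBall x ρ, G y) = ∫⁻ y, (closedBall x ρ).indicator G y := fun x => by
    rw [lintegral_indicator isClosed_closedBall.measurableSet]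
  simp only [h1]
  rw [lintegral_lintegral_swap (ball_meas hG ρ).aemeasurable, ← lintegral_const_mul _ hG]
  refine lintegral_mono fun y => ?_
  have h2 : ∀ x, (closedBall x ρ).indicator G y = (closedBall y ρ).indicator (fun _ => G y) x := by
    intro x; simp [indicator, mem_closedBall, dist_comm]
  simp only [h2]
  rw [lintegral_indicator isClosed_closedBall.measurableSet]
  simp only [lintegral_const, Measure.restrict_apply_univ]
  rw [mul_comm]
  gcongr
  exact hM y

lemma sum_pow_le {q θ : ℝ} (hq : 0 < q) (h0 : 0 < θ) (h1 : θ < 1) (a : ℕ → ℝ≥0∞) :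
    (∑' k, a k) ^ q ≤ ENNReal.ofReal ((1 - θ)⁻¹ ^ q) *
      ∑' k, (ENNReal.ofReal ((θ ^ k)⁻¹) * a k) ^ q := by
  set b : ℕ → ℝ≥0∞ := fun k => ENNReal.ofReal ((θ ^ k)⁻¹) * a k with hb
  set T := (∑' k, b k ^ q) ^ (1 / q) with hT
  have hbT : ∀ k, b k ≤ T := fun k => by
    have : b k ^ q ≤ ∑' k, b k ^ q := ENNReal.le_tsum k
    calc b k = (b k ^ q) ^ (1 / q) := by
          rw [← ENNReal.rpow_mul, mul_one_div_cancel hq.ne', ENNReal.rpow_one]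
      _ ≤ _ := ENNReal.rpow_le_rpow this (by positivity)
  have hab : ∀ k, a k = ENNReal.ofReal (θ ^ k) * b k := fun k => by
    rw [hb]
    simp only
    rw [← mul_assoc, ← ENNReal.ofReal_mul (by positivity), mul_inv_cancel₀ (by positivity)]
    simp
  have hg : ∑' k : ℕ, ENNReal.ofReal (θ ^ k) = ENNReal.ofReal ((1 - θ)⁻¹) := by
    rw [← ENNReal.ofReal_tsum_of_nonneg (fun k => by positivity)
      (summable_geometric_of_lt_one h0.le h1), tsum_geometric_of_lt_one h0.le h1]
  have h2 : ∑' k, a k ≤ ENNReal.ofReal ((1 - θ)⁻¹) * T := by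
    rw [← hg, ← ENNReal.tsum_mul_right]
    refine ENNReal.tsum_le_tsum fun k => ?_
    rw [hab k]
    gcongr
    exact hbT k
  have h3 : 0 < 1 - θ := by linarith
  calc (∑' k, a k) ^ q ≤ (ENNReal.ofReal ((1 - θ)⁻¹) * T) ^ q := by gcongr
    _ = _ := by
      rw [ENNReal.mul_rpow_of_nonneg _ _ hq.le, hT, ← ENNReal.rpow_mul, one_div_mul_cancel hq.ne',
        ENNReal.rpow_one, ENNReal.ofReal_rpow_of_pos (by positivity)]

lemma sum_lemma (n : ℕ) {q r t β : ℝ} (hr : 0 < r) (hrq : r ≤ q) (hβ : 0 < t + q * β) :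
    ∃ C > (0:ℝ), ∀ (G : Rn n → ℝ≥0∞), Measurable G → ∀ (μ : Measure (Rn n)) [SFinite μ] (M L : ℝ),
      0 < M → 0 < L →
      (∀ (k : ℕ) (y : Rn n), μ (closedBall y (L / 2 ^ (k + 1))) ≤
        ENNReal.ofReal (M * (L / 2 ^ (k + 1)) ^ t)) →
      ∫⁻ x, (∑' k : ℕ, ENNReal.ofReal ((L / 2 ^ (k + 1)) ^ β) *
        (∫⁻ y in closedBall x (L / 2 ^ (k + 1)), G y) ^ (1 / r)) ^ q ∂μ ≤
        ENNReal.ofReal (C * M * L ^ (t + q * β)) * (∫⁻ y, G y) ^ (q / r) := by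
  have hq : 0 < q := hr.trans_le hrq
  set e := t + q * β with he
  set θ : ℝ := (2:ℝ) ^ (-(e / (2 * q))) with hθ
  have h0 : 0 < θ := by positivity
  have h1 : θ < 1 := Real.rpow_lt_one_of_one_lt_of_neg (by norm_num) (by
    have : 0 < e / (2 * q) := by positivity
    linarith)
  have hθq : θ ^ q < 1 := Real.rpow_lt_one h0.le h1 hq
  have hθq0 : 0 < θ ^ q := by positivity
  have hsub : 0 < 1 - θ := by linarith
  have hsub2 : 0 < 1 - θ ^ q := by linarith
  refine ⟨(1 - θ)⁻¹ ^ q * ((1 / 2) ^ e * (1 - θ ^ q)⁻¹), by positivity, ?_⟩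
  intro G hG μ _ M L hM hL hμ
  set ρ : ℕ → ℝ := fun k => L / 2 ^ (k + 1) with hρ
  have hρ0 : ∀ k, 0 < ρ k := fun k => by positivity
  set ν : ℕ → Rn n → ℝ≥0∞ := fun k x => ∫⁻ y in closedBall x (ρ k), G y with hν
  set I := ∫⁻ y, G y with hI
  have mν : ∀ k, Measurable (ν k) := fun k => nu_meas hG (ρ k)
  have hk : ∀ k, ∫⁻ x, ν k x ^ (q / r) ∂μ ≤ ENNReal.ofReal (M * ρ k ^ t) * I ^ (q / r) := by
    intro k
    have h1r : 1 ≤ q / r := (one_le_div hr).2 hrq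
    have hsplit : ∀ z : ℝ≥0∞, z ^ (q / r) = z ^ (q / r - 1) * z := fun z => by
      conv_rhs => rw [← ENNReal.rpow_one z, ← ENNReal.rpow_mul, one_mul]
      rw [← ENNReal.rpow_add_of_nonneg _ _ (by linarith) (by norm_num)]
      congr 1; ring
    calc ∫⁻ x, ν k x ^ (q / r) ∂μ ≤ ∫⁻ x, I ^ (q / r - 1) * ν k x ∂μ := by
          refine lintegral_mono fun x => ?_
          simp only
          rw [hsplit (ν k x)]
          exact mul_le_mul_left (ENNReal.rpow_le_rpow (setLIntegral_le_lintegral _ _) (by linarith)) _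
      _ = I ^ (q / r - 1) * ∫⁻ x, ν k x ∂μ := lintegral_const_mul _ (mν k)
      _ ≤ I ^ (q / r - 1) * (ENNReal.ofReal (M * ρ k ^ t) * I) := by
          gcongr
          exact nu_int hG (ρ k) μ (hμ k)
      _ = _ := by rw [hsplit I]; ring
  have hreal : ∀ k, ((θ ^ k)⁻¹ * ρ k ^ β) ^ q * (M * ρ k ^ t) =
      M * (L ^ e * (1 / 2) ^ e) * (θ ^ q) ^ k := by
    intro k
    have hρk : ρ k = (L * (1 / 2)) * ((2:ℝ) ^ (-(k:ℝ))) := by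
      simp only [hρ]
      rw [Real.rpow_neg (by norm_num), Real.rpow_natCast, pow_succ]; field_simp
    have a1 : ((θ ^ k)⁻¹ * ρ k ^ β) ^ q = ((θ ^ q) ^ k)⁻¹ * ρ k ^ (q * β) := by
      rw [Real.mul_rpow (by positivity) (by have := hρ0 k; positivity), ← Real.rpow_mul (hρ0 k).le,
        mul_comm β q, Real.inv_rpow (by positivity), ← Real.rpow_natCast, ← Real.rpow_natCast,
        ← Real.rpow_mul h0.le, ← Real.rpow_mul h0.le, mul_comm q (k:ℝ)]
    have a2 : ρ k ^ (q * β) * ρ k ^ t = L ^ e * (1 / 2) ^ e * ((θ ^ q) ^ k) ^ 2 := by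
      rw [← Real.rpow_add (hρ0 k), show q * β + t = e by rw [he]; ring, hρk,
        Real.mul_rpow (by positivity) (by positivity), Real.mul_rpow hL.le (by norm_num)]
      congr 1
      have h2 : (0:ℝ) ≤ 2 := by norm_num
      rw [← Real.rpow_natCast, ← Real.rpow_natCast, ← Real.rpow_mul h0.le, ← Real.rpow_mul h0.le,
        hθ, ← Real.rpow_mul h2, ← Real.rpow_mul h2]
      congr 1
      push_cast
      field_simp
    have hz : (θ ^ q) ^ k ≠ 0 := by positivity
    calc _ = M * ((θ ^ q) ^ k)⁻¹ * (ρ k ^ (q * β) * ρ k ^ t) := by rw [a1]; ring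
      _ = _ := by rw [a2]; field_simp
  calc _ ≤ ∫⁻ x, ENNReal.ofReal ((1 - θ)⁻¹ ^ q) * ∑' k, ENNReal.ofReal (((θ ^ k)⁻¹ * ρ k ^ β) ^ q) *
            ν k x ^ (q / r) ∂μ := by
        refine lintegral_mono fun x => ?_
        refine (sum_pow_le hq h0 h1 _).trans (le_of_eq ?_)
        congr 1
        refine tsum_congr fun k => ?_
        have hρk := hρ0 k
        rw [← mul_assoc, ← ENNReal.ofReal_mul (by positivity), ENNReal.mul_rpow_of_nonneg _ _ hq.le,
          ENNReal.ofReal_rpow_of_pos (by positivity), ← ENNReal.rpow_mul]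
        congr 2
        ring
    _ = ENNReal.ofReal ((1 - θ)⁻¹ ^ q) * ∑' k, ENNReal.ofReal (((θ ^ k)⁻¹ * ρ k ^ β) ^ q) *
            ∫⁻ x, ν k x ^ (q / r) ∂μ := by
        have mm : ∀ k, Measurable fun x => ENNReal.ofReal (((θ ^ k)⁻¹ * ρ k ^ β) ^ q) *
            ν k x ^ (q / r) := fun k => ((mν k).pow_const _).const_mul _
        rw [lintegral_const_mul _ (Measurable.tsum mm), lintegral_tsum fun k => (mm k).aemeasurable]
        congr 1
        refine tsum_congr fun k => ?_
        rw [lintegral_const_mul _ ((mν k).pow_const _)]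
    _ ≤ ENNReal.ofReal ((1 - θ)⁻¹ ^ q) * ∑' k, ENNReal.ofReal (((θ ^ k)⁻¹ * ρ k ^ β) ^ q) *
            (ENNReal.ofReal (M * ρ k ^ t) * I ^ (q / r)) := by
        gcongr with k
        exact hk k
    _ = ENNReal.ofReal ((1 - θ)⁻¹ ^ q) * ((∑' k : ℕ, ENNReal.ofReal (M * (L ^ e * (1 / 2) ^ e) *
            (θ ^ q) ^ k)) * I ^ (q / r)) := by
        rw [← ENNReal.tsum_mul_right]
        congr 1
        refine tsum_congr fun k => ?_
        have hρk := hρ0 k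
        rw [← mul_assoc, ← ENNReal.ofReal_mul (by positivity), hreal]
    _ = _ := by
        rw [← ENNReal.ofReal_tsum_of_nonneg (fun k => by positivity)
          ((summable_geometric_of_lt_one hθq0.le hθq).mul_left _), tsum_mul_left,
          tsum_geometric_of_lt_one hθq0.le hθq, ← mul_assoc, ← ENNReal.ofReal_mul (by positivity)]
        congr 2
        ring

/-- The restricted density. -/
def dens {n : ℕ} (f : Rn n → ℝ) (r κ : ℝ) (Qs : Set (Rn n)) : Rn n → ℝ≥0∞ :=
  Qs.indicator (fun x => ∫⁻ y in Qs, kern f r κ x y)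

lemma dens_meas {n : ℕ} {f : Rn n → ℝ} (hf : Measurable f) (r κ : ℝ) {Qs : Set (Rn n)}
    (hQ : MeasurableSet Qs) : Measurable (dens f r κ Qs) :=
  ((kern_meas hf r κ).lintegral_prod_right' (ν := volume.restrict Qs)).indicator hQ

lemma step_lemma {n : ℕ} (hn : 1 ≤ n) {f : Rn n → ℝ} (hf : Measurable f)
    (floc : LocallyIntegrable f) {Qs V : Set (Rn n)}
    {r κ β ρ : ℝ} (hr : 1 < r) (hκ : 0 ≤ κ) (hβ : β * r = κ - 2 * n) (hρ : 0 < ρ) {x : Rn n}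
    (hU : closedBall x ρ ⊆ Qs) (hV : MeasurableSet V) (hVQ : V ⊆ Qs) (fV : IntegrableOn f V)
    (hVt : volume V ≠ ⊤) (hVl : ENNReal.ofReal ((ρ / n) ^ n) ≤ volume V)
    (hD : ∀ x' ∈ closedBall x ρ, ∀ y ∈ V, euclDist x' y ≤ 24 * n * ρ) :
    ENNReal.ofReal |(⨍ y in closedBall x ρ, f y) - ⨍ y in V, f y| ≤
      ENNReal.ofReal (((n:ℝ) ^ n * (24 * n) ^ κ) ^ (1 / r)) * (ENNReal.ofReal (ρ ^ β) *
        (∫⁻ y in closedBall x ρ, dens f r κ Qs y) ^ (1 / r)) := by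
  have hn0 : (0:ℝ) < n := by exact_mod_cast hn
  have hr0 : 0 < r := by linarith
  have hUm : MeasurableSet (closedBall x ρ) := isClosed_closedBall.measurableSet
  have hUv : volume (closedBall x ρ) = ENNReal.ofReal ((2 * ρ) ^ n) := by
    rw [Real.volume_pi_closedBall _ hρ.le]; simp
  have hUl : ENNReal.ofReal (ρ ^ n) ≤ volume (closedBall x ρ) := by
    rw [hUv]
    apply ENNReal.ofReal_le_ofReal
    gcongr
    linarith
  have hV0 : volume V ≠ 0 := by
    intro h
    rw [h] at hVl
    have : 0 < (ρ / n) ^ n := by positivity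
    simp at hVl; linarith
  have hU0 : volume (closedBall x ρ) ≠ 0 := by
    rw [hUv]; simp; positivity
  have h1 := avg_diff hf hUm hV (floc.integrableOn_isCompact (isCompact_closedBall x ρ)) fV hU0
    (by rw [hUv]; simp) hV0 hVt hr hκ hD
  set J := ∫⁻ y in closedBall x ρ, dens f r κ Qs y with hJ
  have h2 : ∫⁻ x' in closedBall x ρ, ∫⁻ y in V, kern f r κ x' y ≤ J := by
    refine setLIntegral_mono' hUm fun y hy => ?_
    unfold dens
    rw [indicator_of_mem (hU hy)]
    exact lintegral_mono_set hVQ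
  have h3 : ENNReal.ofReal |(⨍ y in closedBall x ρ, f y) - ⨍ y in V, f y| ^ r ≤
      ENNReal.ofReal (((n:ℝ) ^ n * (24 * n) ^ κ) * ρ ^ (β * r)) * J := by
    refine h1.trans ?_
    calc _ ≤ (ENNReal.ofReal (ρ ^ n))⁻¹ * ((ENNReal.ofReal ((ρ / n) ^ n))⁻¹ *
          (ENNReal.ofReal (24 * n * ρ) ^ κ * J)) := by gcongr
      _ = _ := by
        rw [← ENNReal.ofReal_inv_of_pos (by positivity), ← ENNReal.ofReal_inv_of_pos (by positivity),
          ENNReal.ofReal_rpow_of_pos (by positivity), ← mul_assoc, ← mul_assoc,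
          ← ENNReal.ofReal_mul (by positivity), ← ENNReal.ofReal_mul (by positivity)]
        congr 2
        rw [hβ, Real.rpow_sub hρ, Real.mul_rpow (by positivity) hρ.le, two_mul, Real.rpow_add hρ,
          Real.rpow_natCast, div_pow]
        field_simp
  calc _ = (ENNReal.ofReal |(⨍ y in closedBall x ρ, f y) - ⨍ y in V, f y| ^ r) ^ (1 / r) := by
        rw [← ENNReal.rpow_mul, mul_one_div_cancel hr0.ne', ENNReal.rpow_one]
    _ ≤ _ := ENNReal.rpow_le_rpow h3 (by positivity)
    _ = _ := by
        rw [ENNReal.mul_rpow_of_nonneg _ _ (by positivity), ENNReal.ofReal_rpow_of_pos (by positivity),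
          Real.mul_rpow (by positivity) (by positivity), ENNReal.ofReal_mul (by positivity),
          ← Real.rpow_mul hρ.le, mul_assoc β, mul_one_div_cancel hr0.ne', mul_one, mul_assoc]

lemma pointwise_lemma {n : ℕ} (hn : 1 ≤ n) {f : Rn n → ℝ} (hf : Measurable f)
    (floc : LocallyIntegrable f) {c : Rn n} {L : ℝ} (hL : 0 < L)
    {r κ β : ℝ} (hr : 1 < r) (hκ : 0 ≤ κ) (hβ : β * r = κ - 2 * n) {x : Rn n} {F : ℝ}
    (hx : closedBall x (L / 2) ⊆ closedBall c (6 * L))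
    (hF : Tendsto (fun δ : ℝ => ⨍ y in closedBall x δ, f y) (𝓝[>] 0) (𝓝 F)) :
    ENNReal.ofReal |F - ⨍ y in euclBall c (L / 2), f y| ≤
      ENNReal.ofReal (2 * ((n:ℝ) ^ n * (24 * n) ^ κ) ^ (1 / r)) *
      ∑' k : ℕ, ENNReal.ofReal ((L / 2 ^ (k + 1)) ^ β) *
        (∫⁻ y in closedBall x (L / 2 ^ (k + 1)), dens f r κ (closedBall c (6 * L)) y) ^ (1 / r) := by
  have hn0 : (0:ℝ) < n := by exact_mod_cast hn
  have hn1 : (1:ℝ) ≤ n := by exact_mod_cast hn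
  set Qs := closedBall c (6 * L) with hQs
  set Cs := ((n:ℝ) ^ n * (24 * n) ^ κ) ^ (1 / r) with hCs
  set ρ : ℕ → ℝ := fun k => L / 2 ^ (k + 1) with hρ
  have hρ0 : ∀ k, 0 < ρ k := fun k => by positivity
  have hρs : ∀ k, ρ k = 2 * ρ (k + 1) := fun k => by
    simp only [hρ]; rw [pow_succ 2 (k + 1)]; field_simp
  have hρL : ∀ k, ρ k ≤ L / 2 := fun k => by
    simp only [hρ]
    gcongr
    exact le_self_pow₀ (by norm_num) (by omega)
  have hsubk : ∀ k, closedBall x (ρ k) ⊆ Qs := fun k => (closedBall_subset_closedBall (hρL k)).trans hx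
  set u : ℕ → ℝ := fun k => ⨍ y in closedBall x (ρ k), f y with hu
  set e : ℕ → ℝ≥0∞ := fun k => ENNReal.ofReal ((ρ k) ^ β) *
        (∫⁻ y in closedBall x (ρ k), dens f r κ Qs y) ^ (1 / r) with he
  have hlim : Tendsto ρ atTop (𝓝[>] 0) := by
    rw [tendsto_nhdsWithin_iff]
    refine ⟨?_, Eventually.of_forall hρ0⟩
    have h := (tendsto_pow_atTop_nhds_zero_of_lt_one (r := (1/2:ℝ)) (by norm_num) (by norm_num))
    have h' := ((tendsto_add_atTop_iff_nat 1).2 h).const_mul L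
    rw [mul_zero] at h'
    refine h'.congr fun k => ?_
    simp only [hρ]
    rw [div_pow, one_pow]; ring
  have hedist : ∀ a b : ℝ, edist a b = ENNReal.ofReal |a - b| := fun a b => by
    rw [edist_dist, Real.dist_eq]
  have hstep : ∀ k, edist (u k) (u (k + 1)) ≤ ENNReal.ofReal Cs * e k := by
    intro k
    rw [hedist]
    refine step_lemma hn hf floc hr hκ hβ (hρ0 k) (hsubk k) isClosed_closedBall.measurableSet
      (hsubk (k + 1)) (floc.integrableOn_isCompact (isCompact_closedBall _ _))
      (isCompact_closedBall _ _).measure_ne_top ?_ ?_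
    · rw [Real.volume_pi_closedBall _ (hρ0 _).le, ← hρs, Fintype.card_fin]
      apply ENNReal.ofReal_le_ofReal
      have := hρ0 k
      gcongr
      exact div_le_self this.le hn1
    · intro x' hx' y hy
      refine (euclDist_le' x' y).trans ?_
      have h1 := mem_closedBall.1 hx'
      have h2 := mem_closedBall'.1 hy
      have h3 := dist_triangle x' x y
      have h4 := hρ0 (k+1)
      have h5 := hρs k
      have : dist x' y ≤ 24 * ρ k := by linarith
      nlinarith
  have hB : ENNReal.ofReal |u 0 - ⨍ y in euclBall c (L / 2), f y| ≤ ENNReal.ofReal Cs * e 0 := by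
    have hBm : MeasurableSet (euclBall c (L / 2)) := by
      apply IsOpen.measurableSet
      exact isOpen_lt ((euclDist_cont (n := n)).comp (by fun_prop : Continuous fun y => (c, y)))
        continuous_const
    have hBs : euclBall c (L / 2) ⊆ closedBall c (L / 2) := fun y hy =>
      mem_closedBall'.2 ((dist_le_euclDist c y).trans (le_of_lt hy))
    have hBQ : euclBall c (L / 2) ⊆ Qs := hBs.trans (closedBall_subset_closedBall (by linarith))
    have hr00 : ρ 0 = L / 2 := by simp [hρ]
    refine step_lemma hn hf floc hr hκ hβ (hρ0 0) (hsubk 0) hBm hBQ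
      ((floc.integrableOn_isCompact (isCompact_closedBall c (L/2))).mono_set hBs)
      (measure_ne_top_of_subset hBs (isCompact_closedBall _ _).measure_ne_top) ?_ ?_
    · have hsm : closedBall c (L / (4 * n)) ⊆ euclBall c (L / 2) := fun y hy => by
        have h1 := mem_closedBall'.1 hy
        show euclDist c y < L / 2
        calc euclDist c y ≤ n * dist c y := euclDist_le' c y
          _ ≤ n * (L / (4 * n)) := by gcongr
          _ = L / 4 := by field_simp
          _ < L / 2 := by linarith
      refine le_trans (le_of_eq ?_) (measure_mono hsm)
      rw [Real.volume_pi_closedBall _ (by positivity), Fintype.card_fin, hr00]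
      congr 2
      field_simp; norm_num
    · intro x' hx' y hy
      refine (euclDist_le' x' y).trans ?_
      have h1 := mem_closedBall.1 (hsubk 0 hx')
      have h2 := mem_closedBall'.1 (hBQ hy)
      have h3 := dist_triangle x' c y
      have : dist x' y ≤ 24 * ρ 0 := by rw [hr00]; linarith
      nlinarith
  have hsum := edist_le_tsum_of_edist_le_of_tendsto₀ _ hstep (hF.comp hlim)
  rw [ENNReal.tsum_mul_left] at hsum
  have hCs0 : 0 ≤ Cs := by positivity
  rw [← hedist] at hB ⊢
  calc edist F (⨍ y in euclBall c (L / 2), f y) ≤ edist F (u 0) + edist (u 0) _ := edist_triangle _ _ _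
    _ ≤ ENNReal.ofReal Cs * ∑' k, e k + ENNReal.ofReal Cs * ∑' k, e k := by
      gcongr
      · rw [edist_comm]; exact hsum
      · refine hB.trans ?_
        gcongr
        exact ENNReal.le_tsum 0
    _ = _ := by rw [ENNReal.ofReal_mul (by norm_num), ENNReal.ofReal_ofNat]; ring

/-- **The key Whitney-cube estimate** (inequality (3.6) in the proof of Theorem 3.2).
Let `S ⊆ ℝⁿ` (`n ≥ 2`) be a `d`-set, `n−1 < d < n`, `1 < p < ∞`, `(n−d)/p < s < 1`,
and let `r ∈ (1,p)` be such that `ω = n(1/p − 1/r) + s` satisfies `n−d < ωr < sp` and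
`0 < 1/r − 1/p < ω/n`. Then there are `c₀ > 2` and `C > 0` such that for every
`f ∈ W^{s,p}(ℝⁿ)` with vanishing trace on `S` and every Whitney cube `Q ∈ 𝒲_S` of side
`ℓ(Q) = 2^{−j} ≤ 1`, with `Q* = 12Q` (sup-norm ball of radius `6·2^{−j}`) and
`B = B(x_Q, ℓ(Q*)/c₀)` the Euclidean ball of radius `12·2^{−j}/c₀`,
`∫_Q |f − f_B|^p + |Q||f_B|^p ≤ C |Q*|^{1+pω/n−p/r} (∫_{Q*}∫_{Q*} |f(x)−f(y)|^r/|x−y|^{n+ωr})^{p/r}`. -/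
theorem whitney_cube_estimate {n : ℕ} (hn : 2 ≤ n) (S : Set (Rn n)) (d C₀ : ℝ)
    (hS : IsDSet S d C₀) (hd1 : (n : ℝ) - 1 < d) (hd2 : d < n)
    (p s r ω : ℝ) (hp : 1 < p) (hs1 : ((n : ℝ) - d) / p < s) (hs2 : s < 1)
    (hr1 : 1 < r) (hr2 : r < p) (hω : ω = n * (1 / p - 1 / r) + s)
    (hω1 : (n : ℝ) - d < ω * r) (hω2 : ω * r < s * p)
    (h3 : 0 < 1 / r - 1 / p) (h4 : 1 / r - 1 / p < ω / n)
    (W : Set (ℤ × (Fin n → ℤ))) (hW : IsWhitney S W) :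
    ∃ c₀' > (2:ℝ), ∃ C > (0:ℝ), ∀ f : Rn n → ℝ, Measurable f →
      sobolevNorm s p f < ⊤ → TraceZero S d f →
      ∀ Q ∈ W, (2:ℝ) ^ (-Q.1) ≤ 1 →
        (∫⁻ x in dyadicCube Q.1 Q.2,
            ENNReal.ofReal
              |f x - ⨍ y in euclBall (dyadicCenter Q.1 Q.2) (12 * (2:ℝ) ^ (-Q.1) / c₀'), f y| ^ p)
          + volume (dyadicCube Q.1 Q.2) *
              ENNReal.ofReal
                |⨍ y in euclBall (dyadicCenter Q.1 Q.2) (12 * (2:ℝ) ^ (-Q.1) / c₀'), f y| ^ p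
        ≤ ENNReal.ofReal C *
            volume (closedBall (dyadicCenter Q.1 Q.2) (6 * (2:ℝ) ^ (-Q.1)))
              ^ (1 + p * ω / n - p / r) *
            (∫⁻ x in closedBall (dyadicCenter Q.1 Q.2) (6 * (2:ℝ) ^ (-Q.1)),
                ∫⁻ y in closedBall (dyadicCenter Q.1 Q.2) (6 * (2:ℝ) ^ (-Q.1)),
                  ENNReal.ofReal |f x - f y| ^ r *
                    ENNReal.ofReal (euclDist x y) ^ (-((n:ℝ) + ω * r))) ^ (p / r) := by
  have hn0 : (0:ℝ) < n := by exact_mod_cast (by omega : 0 < n)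
  have hn2 : (2:ℝ) ≤ n := by exact_mod_cast hn
  have hd0 : 0 < d := by linarith
  have hr0 : 0 < r := by linarith
  have hp0 : 0 < p := by linarith
  obtain ⟨hSc, hC₀, hSd⟩ := hS
  have hC00 : 0 < C₀ := by linarith
  set κ : ℝ := (n:ℝ) + ω * r with hκdef
  have hκ : 0 ≤ κ := by linarith
  set β : ℝ := ω - n / r with hβdef
  have hβ : β * r = κ - 2 * n := by rw [hβdef, hκdef]; field_simp; ring
  have e1 : 0 < (n:ℝ) + p * β := by
    have : (n:ℝ) + p * β = n * p * (ω / n - (1 / r - 1 / p)) := by rw [hβdef]; field_simp; ring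
    rw [this]
    have : 0 < ω / n - (1 / r - 1 / p) := by linarith
    positivity
  have e2 : 0 < d + r * β := by
    rw [mul_comm, hβ, hκdef]; linarith
  obtain ⟨C1, hC1, H1⟩ := sum_lemma n (q := p) (r := r) (t := n) (β := β) hr0 hr2.le e1
  obtain ⟨C2, hC2, H2⟩ := sum_lemma n (q := r) (r := r) (t := d) (β := β) hr0 le_rfl e2
  set Cs : ℝ := 2 * ((n:ℝ) ^ n * (24 * n) ^ κ) ^ (1 / r) with hCs
  have hCs0 : 0 < Cs := by positivity
  set K1 : ℝ := Cs ^ p * (C1 * 2 ^ n) with hK1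
  set K3 : ℝ := C₀ * 2 ^ d * (Cs ^ r * (C2 * (C₀ * 2 ^ d))) with hK3
  have hK10 : 0 < K1 := by positivity
  have hK30 : 0 < K3 := by positivity
  refine ⟨24, by norm_num, K1 + K3 ^ (p / r), by positivity, ?_⟩
  intro f hf hfs htr Q hQ hQ1
  set L : ℝ := (2:ℝ) ^ (-Q.1) with hLdef
  have hL : 0 < L := by positivity
  set c := dyadicCenter Q.1 Q.2 with hc
  rw [show 12 * L / 24 = L / 2 by ring]
  have hcube : dyadicCube Q.1 Q.2 = closedBall c (L / 2) := by
    ext y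
    simp only [dyadicCube, mem_ofPred_eq, mem_closedBall, hc, dyadicCenter,
      dist_pi_le_iff (by positivity : 0 ≤ L / 2), Real.dist_eq, abs_le, ← hLdef]
    refine forall_congr' fun i => ?_
    constructor
    · rintro ⟨h1, h2⟩; constructor <;> linarith
    · rintro ⟨h1, h2⟩; constructor <;> linarith
  rw [hcube]
  have hvol : volume (closedBall c (L / 2)) = ENNReal.ofReal (L ^ n) := by
    rw [Real.volume_pi_closedBall _ (by positivity), Fintype.card_fin]; congr 2; ring
  have hvols : volume (closedBall c (6 * L)) = ENNReal.ofReal ((12 * L) ^ n) := by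
    rw [Real.volume_pi_closedBall _ (by positivity), Fintype.card_fin]; congr 2; ring
  -- local integrability
  have floc : LocallyIntegrable f := by
    have h1 : (∫⁻ x, ENNReal.ofReal |f x| ^ p) ^ (1 / p) < ⊤ :=
      lt_of_le_of_lt le_self_add hfs
    have hm : MemLp f (ENNReal.ofReal p) volume := by
      refine ⟨hf.aestronglyMeasurable, ?_⟩
      rw [eLpNorm_eq_lintegral_rpow_enorm_toReal (by simpa using hp0) (by simp),
        ENNReal.toReal_ofReal hp0.le]
      simpa only [← Real.norm_eq_abs, ofReal_norm] using h1
    exact hm.locallyIntegrable (by simpa using hp.le)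
  set Qs := closedBall c (6 * L) with hQs
  set fB := ⨍ y in euclBall c (L / 2), f y with hfB
  have hG := dens_meas hf r κ (isClosed_closedBall (x := c) (ε := 6 * L)).measurableSet
  set I : ℝ≥0∞ := ∫⁻ x in Qs, ∫⁻ y in Qs, ENNReal.ofReal |f x - f y| ^ r *
    ENNReal.ofReal (euclDist x y) ^ (-κ) with hI
  have hGI : ∫⁻ y, dens f r κ Qs y = I := by
    unfold dens
    rw [lintegral_indicator isClosed_closedBall.measurableSet]
    rfl
  set Sg : Rn n → ℝ≥0∞ := fun x => ∑' k : ℕ, ENNReal.ofReal ((L / 2 ^ (k + 1)) ^ β) *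
        (∫⁻ y in closedBall x (L / 2 ^ (k + 1)), dens f r κ Qs y) ^ (1 / r) with hSg
  have mSg : Measurable Sg := Measurable.tsum fun k =>
    ((nu_meas hG (L / 2 ^ (k + 1))).pow_const _).const_mul _
  have hpt : ∀ {x : Rn n} {F : ℝ}, closedBall x (L / 2) ⊆ Qs →
      Tendsto (fun δ : ℝ => ⨍ y in closedBall x δ, f y) (𝓝[>] 0) (𝓝 F) →
      ENNReal.ofReal |F - fB| ≤ ENNReal.ofReal Cs * Sg x := fun hx hF =>
    pointwise_lemma (by omega) hf floc hL hr1 hκ hβ hx hF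
  have hLk : ∀ k : ℕ, L / 2 ^ (k + 1) ≤ L / 2 := fun k => by
    gcongr
    exact le_self_pow₀ (by norm_num) (by omega)
  -- first term
  have T1 : ∫⁻ x in closedBall c (L / 2), ENNReal.ofReal |f x - fB| ^ p ≤
      ENNReal.ofReal (K1 * L ^ ((n:ℝ) + p * β)) * I ^ (p / r) := by
    have hleb : ∀ᵐ x ∂(volume : Measure (Rn n)),
        Tendsto (fun δ : ℝ => ⨍ y in closedBall x δ, f y) (𝓝[>] 0) (𝓝 (f x)) := by
      filter_upwards [IsUnifLocDoublingMeasure.ae_tendsto_average volume floc 1] with x hx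
      refine hx (fun _ => x) (fun δ => δ) tendsto_id ?_
      filter_upwards [self_mem_nhdsWithin] with δ hδ
      exact mem_closedBall_self (by simpa using (le_of_lt hδ))
    have hμ := H1 _ hG (volume.restrict (closedBall c (L / 2))) (2 ^ n) L (by positivity) hL (by
      intro k y
      refine (Measure.restrict_apply_le _ _).trans ?_
      rw [Real.volume_pi_closedBall _ (by positivity), Fintype.card_fin, mul_pow, Real.rpow_natCast])
    rw [hGI] at hμ
    calc _ ≤ ∫⁻ x in closedBall c (L / 2), ENNReal.ofReal (Cs ^ p) * Sg x ^ p := by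
          refine setLIntegral_mono_ae' isClosed_closedBall.measurableSet ?_
          filter_upwards [hleb] with x hx hxQ
          rw [← ENNReal.ofReal_rpow_of_pos hCs0, ← ENNReal.mul_rpow_of_nonneg _ _ hp0.le]
          refine ENNReal.rpow_le_rpow (hpt ?_ hx) hp0.le
          refine closedBall_subset_closedBall' ?_
          have := mem_closedBall.1 hxQ
          linarith
      _ = ENNReal.ofReal (Cs ^ p) * ∫⁻ x in closedBall c (L / 2), Sg x ^ p :=
          lintegral_const_mul _ (mSg.pow_const _)
      _ ≤ _ := mul_le_mul_right hμ _
      _ = _ := by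
          rw [← mul_assoc, ← ENNReal.ofReal_mul (by positivity), hK1]
          congr 2
          ring
  -- second term
  obtain ⟨-, hWu, hWd⟩ := hW
  obtain ⟨hW1, z, hz, hzS⟩ := hWd Q hQ
  rw [hcube] at hz hW1
  have hSne : S.Nonempty := by
    by_contra h
    rw [not_nonempty_iff_eq_empty] at h
    have := hW1 z hz
    rw [h, infDist_empty] at this
    linarith
  obtain ⟨w, hwS, hw⟩ := hSc.exists_infDist_eq_dist hSne z
  have hwc : dist w c ≤ 9 / 2 * L := by
    have h1 := mem_closedBall.1 hz
    have h2 := dist_triangle w z c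
    rw [dist_comm w z] at h2
    rw [hw] at hzS
    linarith
  have T2 : ENNReal.ofReal |fB| ^ r ≤ ENNReal.ofReal (K3 * L ^ (r * β)) * I := by
    set A := closedBall w (L / 2) ∩ S with hA
    have hAm : MeasurableSet A := isClosed_closedBall.measurableSet.inter hSc.measurableSet
    obtain ⟨hA1, hA2⟩ := hSd w hwS (L / 2) (by positivity) (by linarith)
    have hfin : IsFiniteMeasure ((μH[d] : Measure (Rn n)).restrict A) := ⟨by
      rw [Measure.restrict_apply_univ]
      exact hA2.trans_lt ENNReal.ofReal_lt_top⟩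
    have hμ := H2 _ hG ((μH[d] : Measure (Rn n)).restrict A) (C₀ * 2 ^ d) L (by positivity) hL (by
      intro k y
      have hk0 : 0 < L / 2 ^ (k + 1) := by positivity
      rw [Measure.restrict_apply isClosed_closedBall.measurableSet]
      rcases (closedBall y (L / 2 ^ (k + 1)) ∩ A).eq_empty_or_nonempty with h | ⟨v, hv1, hv2⟩
      · rw [h]; simp
      · have hsub : closedBall y (L / 2 ^ (k + 1)) ∩ A ⊆ closedBall v (2 * (L / 2 ^ (k + 1))) ∩ S := by
          refine inter_subset_inter (closedBall_subset_closedBall' ?_) inter_subset_right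
          have := mem_closedBall'.1 hv1
          linarith
        refine (measure_mono hsub).trans ((hSd v hv2.2 _ (by positivity) ?_).2.trans (le_of_eq ?_))
        · have := hLk k
          linarith
        · rw [Real.mul_rpow (by norm_num) hk0.le, mul_assoc])
    rw [hGI, div_self hr0.ne', ENNReal.rpow_one] at hμ
    have h1 : ENNReal.ofReal |fB| ^ r * μH[d] A ≤
        ENNReal.ofReal (Cs ^ r) * (ENNReal.ofReal (C2 * (C₀ * 2 ^ d) * L ^ (d + r * β)) * I) := by
      calc _ = ∫⁻ x in A, ENNReal.ofReal |fB| ^ r ∂(μH[d] : Measure (Rn n)) := by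
            rw [lintegral_const, Measure.restrict_apply_univ]
        _ ≤ ∫⁻ x in A, ENNReal.ofReal (Cs ^ r) * Sg x ^ r ∂(μH[d] : Measure (Rn n)) := by
            refine lintegral_mono_ae ?_
            have htr' := ae_mono (Measure.restrict_mono (inter_subset_right : A ⊆ S) le_rfl) htr
            filter_upwards [htr', ae_restrict_mem hAm] with x hx hxA
            rw [← ENNReal.ofReal_rpow_of_pos hCs0, ← ENNReal.mul_rpow_of_nonneg _ _ hr0.le]
            refine ENNReal.rpow_le_rpow ?_ hr0.le
            have hh := hpt (x := x) (F := 0) ?_ hx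
            · simpa using hh
            · refine closedBall_subset_closedBall' ?_
              have := mem_closedBall.1 hxA.1
              have := dist_triangle x w c
              linarith
        _ = ENNReal.ofReal (Cs ^ r) * ∫⁻ x in A, Sg x ^ r ∂(μH[d] : Measure (Rn n)) :=
            lintegral_const_mul _ (mSg.pow_const _)
        _ ≤ _ := mul_le_mul_right hμ _
    have hpos : 0 < C₀⁻¹ * (L / 2) ^ d := by positivity
    calc ENNReal.ofReal |fB| ^ r
        = ENNReal.ofReal ((C₀⁻¹ * (L / 2) ^ d)⁻¹) *
          (ENNReal.ofReal |fB| ^ r * ENNReal.ofReal (C₀⁻¹ * (L / 2) ^ d)) := by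
          rw [mul_left_comm, ← ENNReal.ofReal_mul (by positivity), inv_mul_cancel₀ hpos.ne']; simp
      _ ≤ ENNReal.ofReal ((C₀⁻¹ * (L / 2) ^ d)⁻¹) * (ENNReal.ofReal (Cs ^ r) *
          (ENNReal.ofReal (C2 * (C₀ * 2 ^ d) * L ^ (d + r * β)) * I)) := by
          refine mul_le_mul_right (le_trans ?_ h1) _
          exact mul_le_mul_right hA1 _
      _ = _ := by
          rw [← mul_assoc, ← mul_assoc, ← ENNReal.ofReal_mul (by positivity),
            ← ENNReal.ofReal_mul (by positivity)]
          congr 2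
          rw [hK3, Real.div_rpow hL.le (by norm_num), Real.rpow_add hL]
          field_simp
  have T3 : ENNReal.ofReal |fB| ^ p ≤ ENNReal.ofReal (K3 ^ (p / r) * L ^ (p * β)) * I ^ (p / r) := by
    calc ENNReal.ofReal |fB| ^ p = (ENNReal.ofReal |fB| ^ r) ^ (p / r) := by
          rw [← ENNReal.rpow_mul]; congr 1; field_simp
      _ ≤ _ := ENNReal.rpow_le_rpow T2 (by positivity)
      _ = _ := by
          rw [ENNReal.mul_rpow_of_nonneg _ _ (by positivity), ENNReal.ofReal_rpow_of_pos (by positivity),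
            Real.mul_rpow (by positivity) (by positivity), ← Real.rpow_mul hL.le]
          congr 4
          field_simp
  have hV : ENNReal.ofReal (L ^ ((n:ℝ) + p * β)) ≤
      volume Qs ^ (1 + p * ω / n - p / r) := by
    rw [hvols, ENNReal.ofReal_rpow_of_pos (by positivity), ← Real.rpow_natCast,
      ← Real.rpow_mul (by positivity),
      show (n:ℝ) * (1 + p * ω / n - p / r) = n + p * β by rw [hβdef]; field_simp; ring]
    apply ENNReal.ofReal_le_ofReal
    gcongr
    linarith
  calc _ ≤ ENNReal.ofReal (K1 * L ^ ((n:ℝ) + p * β)) * I ^ (p / r) +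
        ENNReal.ofReal (L ^ n) * (ENNReal.ofReal (K3 ^ (p / r) * L ^ (p * β)) * I ^ (p / r)) := by
        rw [hvol]
        gcongr
    _ = ENNReal.ofReal (K1 + K3 ^ (p / r)) * ENNReal.ofReal (L ^ ((n:ℝ) + p * β)) * I ^ (p / r) := by
        rw [← mul_assoc, ← ENNReal.ofReal_mul (by positivity), ← ENNReal.ofReal_mul (by positivity),
          ← add_mul, ← ENNReal.ofReal_add (by positivity) (by positivity)]
        congr 2
        rw [Real.rpow_add hL, Real.rpow_natCast]
        ring
    _ ≤ _ := by gcongr
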